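/- For any finite graph G and positive integer n, the hive graph of G of height n is constructible. -/

import Mathlib

universe u

/-- `y` dominates `x` in `G`: `y ≠ x` and the closed neighbourhood of `x` is contained
in the closed neighbourhood of `y`. -/
def Dominates {V : Type u} (G : SimpleGraph V) (y x : V) : Prop :=
  y ≠ x ∧ ∀ z : V, (z = x ∨ G.Adj x z) → (z = y ∨ G.Adj y z)

/-- `y` dominates `x` in the subgraph of `G` induced by `S`. -/
def DominatesOn {V : Type u} (G : SimpleGraph V) (S : Set V) (y x : V) : Prop :=
  y ≠ x ∧ ∀ z ∈ S, (z = x ∨ G.Adj x z) → (z = y ∨ G.Adj y z)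

/-- `r` (a well-order on `V`) is a construction order for `G`: every non-root vertex `x`
(i.e. one with a strictly earlier vertex) is dominated, in the subgraph induced by the
vertices up to and including `x`, by some strictly earlier vertex. -/
def ConstructionOrderSpec {V : Type u} (G : SimpleGraph V) (r : V → V → Prop) : Prop :=
  ∀ x : V, (∃ y, r y x) → ∃ y, r y x ∧ DominatesOn G {z | r z x ∨ z = x} y x

/-- A graph is constructible if it has a construction order. -/
def Constructible {V : Type u} (G : SimpleGraph V) : Prop :=
  ∃ r : V → V → Prop, IsWellOrder V r ∧ ConstructionOrderSpec G r

/-- The hive graph of `G` of height `n`: vertex set `(V × {0, ..., n}) ∪ {v}`, where the hive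
vertex `v` (here `none`) is adjacent to every `(x, n)`, and distinct `(x, i)`, `(x', i')` are
adjacent iff `x` and `x'` are adjacent or equal and `|i - i'| ≤ 1`. -/
def hiveGraph {V : Type u} (G : SimpleGraph V) (n : ℕ) :
    SimpleGraph (Option (V × Fin (n + 1))) :=
  SimpleGraph.fromRel (fun p q =>
    match p, q with
    | none, some (_, i) => i.val = n
    | some (a, i), some (b, j) => (a = b ∨ G.Adj a b) ∧ i.val ≤ j.val + 1 ∧ j.val ≤ i.val + 1
    | _, _ => False)

def hiveKey {V : Type u} (e : V → ℕ) (n : ℕ) : Option (V × Fin (n + 1)) → ℕ ×ₗ ℕ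
  | none => toLex (0, 0)
  | some (a, i) => toLex (n - i.val + 1, e a)

theorem hiveGraph_constructible {V : Type u} [Fintype V] (G : SimpleGraph V) (n : ℕ)
    (hn : 0 < n) : Constructible (hiveGraph G n) := by
  obtain ⟨e, he⟩ : ∃ e : V → ℕ, Function.Injective e :=
    ⟨fun a => (Fintype.equivFin V a).val,
      fun a b h => (Fintype.equivFin V).injective (Fin.ext h)⟩
  have hinj : Function.Injective (hiveKey e n) := by
    rintro (_ | ⟨a, i⟩) (_ | ⟨b, j⟩) h
    · rfl
    · simp [hiveKey] at h
    · simp [hiveKey] at h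
    · simp only [hiveKey, EmbeddingLike.apply_eq_iff_eq, Prod.mk.injEq] at h
      have h1 := he h.2
      have h2 : i = j := by
        apply Fin.ext
        have := i.isLt
        have := j.isLt
        omega
      rw [h1, h2]
  let F : (fun p q => hiveKey e n p < hiveKey e n q) ↪r
      ((· < ·) : ℕ ×ₗ ℕ → ℕ ×ₗ ℕ → Prop) := ⟨⟨hiveKey e n, hinj⟩, Iff.rfl⟩
  refine ⟨fun p q => hiveKey e n p < hiveKey e n q, F.isWellOrder, ?_⟩
  rintro (_ | ⟨a, i⟩) ⟨y, hy⟩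
  · exfalso
    rcases y with (_ | ⟨b, j⟩) <;> simp [hiveKey, Prod.Lex.toLex_lt_toLex] at hy
  have hi := i.isLt
  by_cases hin : i.val = n
  · refine ⟨none, by simp [hiveKey, Prod.Lex.toLex_lt_toLex], by simp, ?_⟩
    rintro (_ | ⟨b, j⟩) hz hadj
    · exact Or.inl rfl
    · right
      have hj := j.isLt
      have : j.val = n := by
        rcases hz with hz | hz
        · simp only [hiveKey, Prod.Lex.toLex_lt_toLex] at hz
          omega
        · simp only [Option.some.injEq, Prod.mk.injEq] at hz
          rw [hz.2, hin]
      simp [hiveGraph, this]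
  · have hlt : i.val + 1 < n + 1 := by omega
    refine ⟨some (a, ⟨i.val + 1, hlt⟩), ?_, ?_, ?_⟩
    · simp only [hiveKey, Prod.Lex.toLex_lt_toLex]
      omega
    · simp [Fin.ext_iff]
    rintro (_ | ⟨b, j⟩) hz hadj
    · simp [hiveGraph, hin] at hadj
    · have hj := j.isLt
      have hij : i.val ≤ j.val := by
        rcases hz with hz | hz
        · simp only [hiveKey, Prod.Lex.toLex_lt_toLex] at hz
          omega
        · simp only [Option.some.injEq, Prod.mk.injEq] at hz
          rw [hz.2]
      have key : (a = b ∨ G.Adj a b) ∧ j.val ≤ i.val + 1 := by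
        rcases hadj with h | h
        · simp only [Option.some.injEq, Prod.mk.injEq] at h
          exact ⟨Or.inl h.1.symm, by rw [h.2]; omega⟩
        · simp only [hiveGraph, SimpleGraph.fromRel_adj] at h
          rcases h.2 with h | h
          · exact ⟨h.1, h.2.2⟩
          · exact ⟨h.1.imp Eq.symm fun h => h.symm, h.2.1⟩
      by_cases hEq : (some (b, j) : Option (V × Fin (n + 1))) = some (a, ⟨i.val + 1, hlt⟩)
      · exact Or.inl hEq
      · right
        simp only [hiveGraph, SimpleGraph.fromRel_adj]
        refine ⟨fun h => hEq h.symm, Or.inl ⟨key.1, ?_, ?_⟩⟩ <;> omega
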